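/- Let 0 ≤ l ≤ n. The map 𝔖_n → X_n^{(l)}·𝔖_{l,n−l}, w ↦ w a_l, is a bijection from 𝔖_n onto the set X_n^{(l)}·𝔖_{l,n−l} of products of an element of X_n^{(l)} with an element of 𝔖_{l,n−l}. -/

import Mathlib

open scoped Classical

noncomputable section

/-! ## The hyperoctahedral group `W_n` as signed permutations of `I_n ⊆ ℤ` -/

abbrev P := Equiv.Perm ℤ

/-- `W_n` : permutations of `I_n = {±1, …, ±n}` commuting with `i ↦ -i`,
realized as permutations of `ℤ` fixing everything outside `I_n`. -/
def Wset (n : ℕ) : Set P :=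
  {π | (∀ i : ℤ, π (-i) = - π i) ∧ ∀ i : ℤ, (n : ℤ) < |i| → π i = i}

/-- the generator `t = (1, -1)` -/
def tgen : P := Equiv.swap 1 (-1)

/-- the generator `s_i = (i, i+1)(-i, -(i+1))` -/
def sgen (i : ℕ) : P :=
  Equiv.swap (i : ℤ) ((i : ℤ) + 1) * Equiv.swap (-(i : ℤ)) (-((i : ℤ) + 1))

/-- the generating set `S_n = {t, s_1, …, s_{n-1}}` -/
def Sset (n : ℕ) : Set P := insert tgen (sgen '' Set.Icc 1 (n - 1))

/-- the length function of `W_n` with respect to `S_n` -/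
def len (n : ℕ) (w : P) : ℕ :=
  sInf {k | ∃ l : List P, (∀ g ∈ l, g ∈ Sset n) ∧ l.prod = w ∧ l.length = k}

/-- number of occurrences of `tgen` in a list -/
def tcount (l : List P) : ℕ := (l.map (fun g => if g = tgen then 1 else 0)).sum

/-- `ℓ_t(w)` : the number of occurrences of `t` in a (any) reduced expression of `w` -/
def tlen (n : ℕ) (w : P) : ℕ :=
  sInf {k | ∃ l : List P, (∀ g ∈ l, g ∈ Sset n) ∧ l.prod = w ∧
    l.length = len n w ∧ tcount l = k}

/-- the Bruhat order on `W_n` : `x ≤ y` iff some reduced expression of `y`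
has a subword whose product is `x`. -/
def bruhat (n : ℕ) (x y : P) : Prop :=
  ∃ l l' : List P, (∀ g ∈ l, g ∈ Sset n) ∧ l.prod = y ∧ l.length = len n y ∧
    List.Sublist l' l ∧ l'.prod = x

/-! ## Generalized Robinson–Schensted correspondence -/

abbrev Tab := List (List ℕ)

/-- row insertion of `x` into one row; returns the new row and the bumped entry (if any) -/
def insRow (x : ℕ) : List ℕ → List ℕ × Option ℕ
  | [] => ([x], none)
  | y :: ys =>
    if x < y then (x :: ys, some y)
    else
      let p := insRow x ys
      (y :: p.1, p.2)

/-- Schensted insertion of `x` into a tableau; returns the new tableau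
and the (row, column) coordinates of the newly created box. -/
def insTab (x : ℕ) : Tab → Tab × ℕ × ℕ
  | [] => ([[x]], 0, 0)
  | row :: rest =>
    let p := insRow x row
    match p.2 with
    | none => (p.1 :: rest, 0, row.length)
    | some b =>
      let q := insTab b rest
      (p.1 :: q.1, q.2.1 + 1, q.2.2)

/-- place the label `lbl` at the end of row `pos.1` of the recording tableau -/
def place (lbl : ℕ) (pos : ℕ × ℕ) (T : Tab) : Tab :=
  if pos.1 < T.length then T.set pos.1 ((T.getD pos.1 []) ++ [lbl]) else T ++ [[lbl]]

/-- one step of the generalized RS algorithm: insert `|π(i)|` into `A⁺` or `A⁻`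
according to the sign of `π(i)`, and record `i` in the corresponding `B`-tableau. -/
def RSstep (π : P) (st : (Tab × Tab) × (Tab × Tab)) (i : ℕ) : (Tab × Tab) × (Tab × Tab) :=
  let v := (π (i : ℤ)).natAbs
  if 0 < π (i : ℤ) then
    let p := insTab v st.1.1
    ((p.1, st.1.2), (place i p.2 st.2.1, st.2.2))
  else
    let p := insTab v st.1.2
    ((st.1.1, p.1), (st.2.1, place i p.2 st.2.2))

def RSfull (n : ℕ) (π : P) : (Tab × Tab) × (Tab × Tab) :=
  (((List.range n).map (· + 1)).foldl (RSstep π)) ((([], []), ([], [])))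

/-- the insertion bitableau `A_n(π) = (A⁺, A⁻)` -/
def Atab (n : ℕ) (π : P) : Tab × Tab := (RSfull n π).1

/-- the recording bitableau `B_n(π) = (B⁺, B⁻)` -/
def Btab (n : ℕ) (π : P) : Tab × Tab := (RSfull n π).2

/-- `T` is a standard Young tableau -/
def IsStdTab (T : Tab) : Prop :=
  (∀ row ∈ T, row ≠ [] ∧ row.Chain' (· < ·)) ∧
  T.Chain' (fun r1 r2 => r2.length ≤ r1.length) ∧
  ∀ i j : ℕ, i + 1 < T.length → j < (T.getD (i + 1) []).length →
    (T.getD i []).getD j 0 < (T.getD (i + 1) []).getD j 0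

/-- `(T₁, T₂)` is an `n`-standard bitableau: both standard, entry sets disjoint
with union `{1, …, n}` -/
def IsNStdBitab (n : ℕ) (p : Tab × Tab) : Prop :=
  IsStdTab p.1 ∧ IsStdTab p.2 ∧ (p.1.flatten ++ p.2.flatten).Perm (List.range' 1 n)

/-- the shape of a bitableau -/
def shape2 (p : Tab × Tab) : List ℕ × List ℕ := (p.1.map List.length, p.2.map List.length)

/-! ## Knuth relations -/

/-- `t_i = (i, -i)` -/
def ttgen (i : ℕ) : P := Equiv.swap (i : ℤ) (-(i : ℤ))

/-- `S'_n = S_n ∪ {t_1, …, t_n}` -/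
def Sprime (n : ℕ) : Set P := Sset n ∪ (ttgen '' Set.Icc 1 n)

/-- the extended left descent set `L'(w)` -/
def Ldesc (n : ℕ) (w : P) : Set P := {u ∈ Sprime n | len n (u * w) < len n w}

/-- the elementary relation `x —s→ y` -/
def knuthStep (n : ℕ) (x y : P) : Prop :=
  ∃ i ∈ Set.Icc 1 (n - 1), y = sgen i * x ∧ len n x < len n y ∧
    ¬ (Ldesc n x ⊆ Ldesc n y)

/-- the relation `x ↔_L y` -/
def knuthRel (n : ℕ) : P → P → Prop :=
  Relation.ReflTransGen (fun a b => knuthStep n a b ∨ knuthStep n b a)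

/-! ## Parabolic subgroups, coset representatives and the decomposition -/

/-- the parabolic subgroup `𝔖_n = ⟨s_1, …, s_{n-1}⟩` -/
def SymN (n : ℕ) : Subgroup P := Subgroup.closure (sgen '' Set.Icc 1 (n - 1))

/-- the parabolic subgroup `𝔖_{l, n-l} = ⟨{s_1, …, s_{n-1}} \ {s_l}⟩` -/
def SymLR (n l : ℕ) : Subgroup P :=
  Subgroup.closure (sgen '' {i | 1 ≤ i ∧ i ≤ n - 1 ∧ i ≠ l})

/-- `Y_{l, n-l}` : minimal length representatives of left cosets of `𝔖_{l,n-l}` in `𝔖_n` -/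
def Yset (n l : ℕ) : Set P :=
  {w | w ∈ SymN n ∧ ∀ u ∈ SymLR n l, len n w ≤ len n (w * u)}

/-- `X_n` : minimal length representatives of the left cosets `w 𝔖_n` in `W_n` -/
def Xset (n : ℕ) : Set P :=
  {w | w ∈ Wset n ∧ ∀ u ∈ SymN n, len n w ≤ len n (w * u)}

/-- `X_n^{(l)}` -/
def Xl (n l : ℕ) : Set P := {w ∈ Xset n | tlen n w = l}

/-- `r_1 = t`, `r_{i+1} = s_i r_i` -/
def rgen : ℕ → P
  | 0 => 1
  | 1 => tgen
  | (i + 2) => sgen (i + 1) * rgen (i + 1)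

/-- `a_l = r_1 r_2 ⋯ r_l` -/
def al (l : ℕ) : P := ((List.range l).map (fun k => rgen (k + 1))).prod

/-- the set `X_n^{(l)} ⬝ 𝔖_{l, n-l}` -/
def XSset (n l : ℕ) : Set P := Set.image2 (· * ·) (Xl n l) (SymLR n l : Set P)

/-- `w = a ⬝ a_l ⬝ σ ⬝ b⁻¹` is the canonical decomposition of `w`
(with `a, b ∈ Y_{l,n-l}`, `σ ∈ 𝔖_{l,n-l}` and additivity of lengths) -/
def IsDecomp (n l : ℕ) (w a σ b : P) : Prop :=
  a ∈ Yset n l ∧ b ∈ Yset n l ∧ σ ∈ SymLR n l ∧ w = a * al l * σ * b⁻¹ ∧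
    len n w = len n a + len n (al l) + len n σ + len n b

/-- the relation `w ⇝_L w'` -/
def squig (n : ℕ) (w w' : P) : Prop :=
  ∃ l a σ b a' σ', tlen n w = l ∧ tlen n w' = l ∧
    IsDecomp n l w a σ b ∧ IsDecomp n l w' a' σ' b ∧ knuthRel n σ σ'

/-! ## The two-parameter Iwahori–Hecke algebra and Kazhdan–Lusztig data -/

/-- the ring `A = ℤ[V^{±1}, v^{±1}]`, as the group algebra of `Γ = ℤ × ℤ`
(a monomial `V^i v^j` corresponds to `(i,j) ∈ ℤ × ℤ`). -/
abbrev RR := AddMonoidAlgebra ℤ (ℤ × ℤ)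

/-- the monomial with exponent `g` -/
def mono (g : ℤ × ℤ) : RR := AddMonoidAlgebra.single g 1

/-- `Γ₋` for the lexicographic order with `V ≫ v`: `V^i v^j < 1` -/
def Gneg (g : ℤ × ℤ) : Prop := g.1 < 0 ∨ (g.1 = 0 ∧ g.2 < 0)

/-- an element of `ℤ[Γ₋]` : all monomials lie in `Γ₋` -/
def inNeg (f : RR) : Prop := ∀ g ∈ f.coeff.support, Gneg g

/-- the bar involution of `A`, `V ↦ V⁻¹`, `v ↦ v⁻¹` -/
def barR : RR → RR := fun f => .ofCoeff (Finsupp.equivMapDomain (Equiv.neg (ℤ × ℤ)) f.coeff)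

/-- the parameter `v_s` of a generator (`v_t = V`, `v_{s_i} = v`) -/
def vgen (g : P) : RR := if g = tgen then mono (1, 0) else mono (0, 1)

/-- the inverse `v_s⁻¹` of the parameter of a generator -/
def vgenInv (g : P) : RR := if g = tgen then mono (-1, 0) else mono (0, -1)

/-- the free `A`-module with basis indexed by permutations; the Hecke algebra
`H_n` is carried by the elements supported on `W_n`. -/
abbrev HH := P →₀ RR

/-- the standard basis element `T_w` -/
def TT (w : P) : HH := Finsupp.single w 1

/-- All the data attached to the Iwahori–Hecke algebra `H_n` of `W_n` over
`A = ℤ[V^{±1}, v^{±1}]`: the multiplication, the bar involution, the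
Kazhdan–Lusztig basis `C_w = Σ_y P*_{y,w} T_y` (for the order on `Γ` given
by `Γ₊ = {V^i v^j : i > 0} ∪ {v^j : j > 0}`), and Lusztig's `M`-polynomials,
together with their defining properties. -/
structure KLData (n : ℕ) where
  mul : HH → HH → HH
  mul_add_left : ∀ a b c, mul (a + b) c = mul a c + mul b c
  mul_add_right : ∀ a b c, mul a (b + c) = mul a b + mul a c
  mul_smul_left : ∀ (r : RR) a b, mul (r • a) b = r • mul a b
  mul_smul_right : ∀ (r : RR) a b, mul a (r • b) = r • mul a b
  mul_assoc : ∀ a b c, mul (mul a b) c = mul a (mul b c)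
  one_mul : ∀ a, mul (TT 1) a = a
  mul_one : ∀ a, mul a (TT 1) = a
  /-- `T_w T_{w'} = T_{w w'}` when lengths add -/
  T_mul : ∀ w w', w ∈ Wset n → w' ∈ Wset n →
    len n (w * w') = len n w + len n w' → mul (TT w) (TT w') = TT (w * w')
  /-- the quadratic relations `T_s² = T_1 + (v_s - v_s⁻¹) T_s` -/
  T_sq : ∀ g ∈ Sset n, mul (TT g) (TT g) = TT 1 + (vgen g - vgenInv g) • TT g
  bar : HH → HH
  bar_add : ∀ a b, bar (a + b) = bar a + bar b
  bar_smul : ∀ (r : RR) a, bar (r • a) = barR r • bar a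
  bar_mul : ∀ a b, bar (mul a b) = mul (bar a) (bar b)
  /-- `bar T_s = T_s⁻¹ = T_s + (v_s⁻¹ - v_s) T_1` -/
  bar_gen : ∀ g ∈ Sset n, bar (TT g) = TT g + (vgenInv g - vgen g) • TT 1
  /-- the Kazhdan–Lusztig basis element `C_w`, whose coordinate at `T_y` is
  the polynomial `P*_{y,w}` -/
  C : P → HH
  /-- `P*_{w,w} = 1` -/
  C_self : ∀ w, C w w = 1
  /-- `P*_{y,w} = 0` unless `y ≤ w` -/
  C_supp : ∀ w y, C w y ≠ 0 → bruhat n y w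
  /-- `P*_{y,w} ∈ ℤ[Γ₋]` for `y < w` -/
  C_neg : ∀ w y, y ≠ w → inNeg (C w y)
  /-- `C_w` is bar-invariant -/
  C_bar : ∀ w, w ∈ Wset n → bar (C w) = C w
  /-- `M s w` is the finitely supported family `z ↦ M^s_{z,w}` -/
  M : P → P → (P →₀ RR)
  M_supp : ∀ s w z, (M s w) z ≠ 0 → bruhat n z w ∧ z ≠ w ∧ len n (s * z) < len n z
  /-- the symmetry condition `bar M^s_{y,w} = M^s_{y,w}` -/
  M_bar : ∀ s w z, barR ((M s w) z) = (M s w) z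
  /-- the condition `M^s_{y,w} + Σ_{y<z<w, sz<z} P*_{y,z} M^s_{z,w} - v_s P*_{y,w} ∈ ℤ[Γ₋]` -/
  M_cond : ∀ s ∈ Sset n, ∀ y w, len n (s * y) < len n y → len n w < len n (s * w) →
    bruhat n y w → y ≠ w →
    inNeg ((M s w) y + (M s w).sum (fun z m => if z = y then 0 else C z y * m)
      - vgen s * C w y)
  /-- `C_s C_w = C_{sw} + Σ_{z<w, sz<z} M^s_{z,w} C_z` when `sw > w` -/
  mulC_up : ∀ s ∈ Sset n, ∀ w ∈ Wset n, len n w < len n (s * w) →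
    mul (C s) (C w) = C (s * w) + (M s w).sum (fun z m => m • C z)
  /-- `C_s C_w = (v_s + v_s⁻¹) C_w` when `sw < w` -/
  mulC_down : ∀ s ∈ Sset n, ∀ w ∈ Wset n, len n (s * w) < len n w →
    mul (C s) (C w) = (vgen s + vgenInv s) • C w

/-- `P_{y,w} = v_y⁻¹ v_w P*_{y,w}` -/
def Ppoly (n : ℕ) (D : KLData n) (y w : P) : RR :=
  mono ((tlen n w : ℤ) - (tlen n y : ℤ),
        ((len n w : ℤ) - (tlen n w : ℤ)) - ((len n y : ℤ) - (tlen n y : ℤ))) * D.C w y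

/-- the `R`-polynomials : `bar T_w = Σ_y R_{y,w} T_y` -/
def Rpoly {n : ℕ} (D : KLData n) (y w : P) : RR := (D.bar (TT w)) y

/-- `y ≤_{L,s} w` : `C_y` occurs with non-zero coefficient in `C_s C_w`
(expressed in the `C`-basis), for some `s ∈ S_n`, `y ≠ w` -/
def leLelem {n : ℕ} (D : KLData n) (y w : P) : Prop :=
  ∃ s ∈ Sset n, len n w < len n (s * w) ∧ (y = s * w ∨ (D.M s w) y ≠ 0)

/-- the preorder `≤_L` -/
def leL {n : ℕ} (D : KLData n) : P → P → Prop := Relation.ReflTransGen (leLelem D)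

/-- the equivalence `∼_L`; its classes are the left cells -/
def simL {n : ℕ} (D : KLData n) (y w : P) : Prop := leL D y w ∧ leL D w y

/-- `f` is a polynomial in `q = v²` -/
def isPolyInQ (f : RR) : Prop := ∀ g ∈ f.coeff.support, g.1 = 0 ∧ 0 ≤ g.2 ∧ 2 ∣ g.2

end

/-!
Both `X_n^{(l)}·𝔖_{l,n-l}` and `𝔖_n·a_l` are the set of those `w ∈ W_n` for which a positive `i`
satisfies `w i < 0` exactly when `i ≤ l`.

Bubble sort shows that `𝔖_n` consists of the `w ∈ W_n` preserving the positive numbers and that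
`𝔖_{l,n-l}` consists of those which moreover preserve `{1, …, l}`. The number of positive `i` with
`w i < 0` is `ℓ_t(w)`: along a reduced word built from the right, each `s_i` preserves this number
and, by the exchange condition, each `t` increases it by one. An element of `X_n` has no right
descent among `s_1, …, s_{n-1}`, hence is increasing on the positive numbers, so an element of
`X_n^{(l)}` is negative precisely at `1, …, l`. So is `a_l`, and left multiplication by `𝔖_n` does
not change signs, while right multiplication by `u ∈ 𝔖_n` preserves this particular sign pattern
exactly when `u ∈ 𝔖_{l,n-l}`.
-/

/-! ### Signed permutations -/

/-- The group `W_n` as a subgroup of the permutations of `ℤ`. -/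
def hyperoctahedral (n : ℕ) : Subgroup P where
  carrier := Wset n
  one_mem' := ⟨fun _ => rfl, fun _ _ => rfl⟩
  mul_mem' hv hw :=
    ⟨fun i => by simp only [Equiv.Perm.mul_apply, hw.1, hv.1],
      fun i hi => by simp only [Equiv.Perm.mul_apply, hw.2 i hi, hv.2 i hi]⟩
  inv_mem' {w} hw :=
    ⟨fun i => by rw [Equiv.Perm.inv_eq_iff_eq, hw.1, Equiv.Perm.coe_inv, Equiv.apply_symm_apply],
      fun i hi => by rw [Equiv.Perm.inv_eq_iff_eq, hw.2 i hi]⟩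

namespace hyperoctahedral

variable {m n : ℕ} {w : P}

lemma apply_neg (hw : w ∈ hyperoctahedral n) (i : ℤ) : w (-i) = -w i := hw.1 i

lemma apply_of_lt (hw : w ∈ hyperoctahedral n) {i : ℤ} (hi : n < i) : w i = i :=
  hw.2 i (lt_abs.mpr (Or.inl hi))

lemma apply_zero (hw : w ∈ hyperoctahedral n) : w 0 = 0 := by
  have h : w (-0) = -w 0 := apply_neg hw 0
  rw [neg_zero] at h
  omega

lemma apply_ne_zero (hw : w ∈ hyperoctahedral n) {i : ℤ} (hi : i ≠ 0) : w i ≠ 0 :=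
  fun h => hi (w.injective (h.trans (apply_zero hw).symm))

lemma abs_apply_le (hw : w ∈ hyperoctahedral n) {i : ℤ} (hi : |i| ≤ n) : |w i| ≤ n := by
  by_contra! h
  have hfix : w i = i := w.injective (hw.2 _ h)
  rw [hfix] at h
  omega

lemma mono (h : m ≤ n) : hyperoctahedral m ≤ hyperoctahedral n :=
  fun _ hw => ⟨hw.1, fun i hi => hw.2 i (by omega)⟩

lemma strictMonoOn_of_forall_lt (hw : w ∈ hyperoctahedral n)
    (h : ∀ i : ℕ, 1 ≤ i → i < n → w i < w (i + 1)) : StrictMonoOn w (Set.Ioi 0) := by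
  refine strictMonoOn_of_lt_succ Set.ordConnected_Ioi fun i _ hi _ => ?_
  rw [Set.mem_Ioi] at hi
  rw [Order.succ_eq_add_one]
  lift i to ℕ using hi.le
  rcases lt_or_ge i n with hin | hin
  · exact h i (by omega) hin
  · rw [apply_of_lt hw (i := (i : ℤ) + 1) (by omega)]
    rcases hin.eq_or_lt with rfl | hin
    · have := (abs_le.mp (abs_apply_le hw (i := n) (by simp))).2
      omega
    · rw [apply_of_lt hw (by omega)]
      omega

lemma strictMono_of_strictMonoOn (hw : w ∈ hyperoctahedral n) (h1 : 0 < w 1)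
    (h : StrictMonoOn w (Set.Ioi 0)) : StrictMono w := by
  refine strictMono_int_of_lt_succ fun i => ?_
  rcases lt_trichotomy i 0 with hi | rfl | hi
  · rcases eq_or_ne i (-1) with rfl | hi'
    · rw [apply_neg hw, neg_add_cancel, apply_zero hw]
      omega
    · have := h (a := -(i + 1)) (b := -i) (Set.mem_Ioi.mpr (by omega))
        (Set.mem_Ioi.mpr (by omega)) (by omega)
      rw [apply_neg hw, apply_neg hw] at this
      omega
  · rwa [apply_zero hw, zero_add]
  · exact h hi (Set.mem_Ioi.mpr (by omega)) (by omega)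

lemma eq_one_of_strictMono (hw : w ∈ hyperoctahedral n) (h : StrictMono w) : w = 1 := by
  have hsucc (i : ℤ) : w (i + 1) = w i + 1 :=
    (h.orderIsoOfSurjective w w.surjective).map_succ i
  ext i
  rw [Equiv.Perm.one_apply]
  induction i with
  | zero => exact apply_zero hw
  | succ i ih => rw [hsucc, ih]
  | pred i ih =>
    have := hsucc (-i - 1)
    rw [sub_add_cancel, ih] at this
    omega

lemma exists_descent (hw : w ∈ hyperoctahedral n) (hne : w ≠ 1) :
    w 1 < 0 ∨ ∃ i : ℕ, 1 ≤ i ∧ i < n ∧ w (i + 1) < w i := by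
  by_contra! ⟨h1, h⟩
  have hmono : StrictMonoOn w (Set.Ioi 0) := strictMonoOn_of_forall_lt hw fun i hi hin =>
    (h i hi hin).lt_of_ne fun heq => by have := w.injective heq; omega
  exact hne (eq_one_of_strictMono hw (strictMono_of_strictMonoOn hw
    (h1.lt_of_ne (apply_ne_zero hw one_ne_zero).symm) hmono))

end hyperoctahedral

open hyperoctahedral

/-! ### The generators -/

section generators

variable {n i a : ℕ} {u : P}

lemma tgen_apply (x : ℤ) : tgen x = if x = 1 then -1 else if x = -1 then 1 else x :=
  Equiv.swap_apply_def _ _ _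

lemma tgen_mul_self : tgen * tgen = 1 := Equiv.swap_mul_self _ _

lemma ttgen_mul_self : ttgen i * ttgen i = 1 := Equiv.swap_mul_self _ _

lemma sgen_apply (hi : 1 ≤ i) (x : ℤ) : sgen i x =
    if x = i then (i : ℤ) + 1 else if x = i + 1 then (i : ℤ) else
    if x = -i then -(i + 1) else if x = -(i + 1) then -(i : ℤ) else x := by
  simp only [sgen, Equiv.Perm.mul_apply, Equiv.swap_apply_def]
  split_ifs <;> omega

lemma sgen_eq_swap_mul_swap (hi : 1 ≤ i) :
    sgen i = Equiv.swap (-((i : ℤ) + 1)) (-i) * Equiv.swap ((i : ℤ) + 1) i := by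
  have hdisj : (Equiv.swap (i : ℤ) (i + 1)).Disjoint (Equiv.swap (-(i : ℤ)) (-(i + 1))) :=
    Equiv.Perm.disjoint_swap_swap (by
      simp only [List.nodup_cons, List.mem_cons, List.not_mem_nil, or_false, not_false_eq_true,
        List.nodup_nil, and_true]
      omega)
  rw [sgen, hdisj.commute.eq, Equiv.swap_comm, Equiv.swap_comm (i : ℤ)]

lemma sgen_mul_self (hi : 1 ≤ i) : sgen i * sgen i = 1 := by
  nth_rw 2 [sgen_eq_swap_mul_swap hi]
  rw [sgen, Equiv.swap_comm (-(_ + 1) : ℤ), mul_assoc, Equiv.swap_mul_self_mul,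
    Equiv.swap_comm, Equiv.swap_mul_self]

lemma tgen_mem_hyperoctahedral (hn : 1 ≤ n) : tgen ∈ hyperoctahedral n := by
  refine ⟨fun x => ?_, fun x hx => ?_⟩
  · simp only [tgen_apply]
    split_ifs <;> omega
  · rw [lt_abs] at hx
    rw [tgen_apply]
    split_ifs <;> omega

lemma sgen_mem_hyperoctahedral (hi : 1 ≤ i) (hin : i < n) : sgen i ∈ hyperoctahedral n := by
  refine ⟨fun x => ?_, fun x hx => ?_⟩
  · simp only [sgen_apply hi]
    split_ifs <;> omega
  · rw [lt_abs] at hx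
    rw [sgen_apply hi]
    split_ifs <;> omega

lemma tgen_mem_Sset : tgen ∈ Sset n := Set.mem_insert _ _

lemma sgen_mem_Sset (hi : 1 ≤ i) (hin : i < n) : sgen i ∈ Sset n :=
  Set.mem_insert_of_mem _ ⟨i, ⟨hi, by omega⟩, rfl⟩

lemma eq_tgen_or_eq_sgen_of_mem_Sset {g : P} (hg : g ∈ Sset n) :
    g = tgen ∨ ∃ i : ℕ, 1 ≤ i ∧ i < n ∧ g = sgen i := by
  rcases hg with rfl | ⟨i, ⟨hi, hin⟩, rfl⟩
  · exact Or.inl rfl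
  · exact Or.inr ⟨i, hi, by omega, rfl⟩

lemma inv_eq_self_of_mem_Sset {g : P} (hg : g ∈ Sset n) : g⁻¹ = g := by
  rw [inv_eq_iff_mul_eq_one]
  rcases eq_tgen_or_eq_sgen_of_mem_Sset hg with rfl | ⟨i, hi, -, rfl⟩
  · exact tgen_mul_self
  · exact sgen_mul_self hi

lemma Sset_subset_hyperoctahedral (hn : 1 ≤ n) : Sset n ⊆ hyperoctahedral n := by
  intro g hg
  rcases eq_tgen_or_eq_sgen_of_mem_Sset hg with rfl | ⟨i, hi, hin, rfl⟩
  · exact tgen_mem_hyperoctahedral hn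
  · exact sgen_mem_hyperoctahedral hi hin

lemma tgen_mul_eq_mul_ttgen (hu : u ∈ hyperoctahedral n) (h : |u i| = 1) :
    tgen * u = u * ttgen i := by
  rw [ttgen, Equiv.mul_swap_eq_swap_mul, apply_neg hu, tgen]
  rcases eq_or_eq_neg_of_abs_eq h with h | h
  · rw [h]
  · rw [h, neg_neg, Equiv.swap_comm]

lemma mul_sgen (hu : u ∈ hyperoctahedral n) :
    u * sgen i = Equiv.swap (u i) (u (i + 1)) * Equiv.swap (-u i) (-u (i + 1)) * u := by
  rw [sgen, ← mul_assoc, Equiv.mul_swap_eq_swap_mul u, mul_assoc, Equiv.mul_swap_eq_swap_mul u,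
    apply_neg hu, apply_neg hu, mul_assoc]

lemma sgen_mul_eq_mul_sgen (hu : u ∈ hyperoctahedral n) (ha : 1 ≤ a)
    (h : u i = a ∧ u (i + 1) = a + 1 ∨ u i = -((a : ℤ) + 1) ∧ u (i + 1) = -a) :
    sgen a * u = u * sgen i := by
  rw [mul_sgen hu]
  rcases h with ⟨h₀, h₁⟩ | ⟨h₀, h₁⟩
  · rw [h₀, h₁, sgen]
  · rw [h₀, h₁, neg_neg, neg_neg, sgen_eq_swap_mul_swap ha]

end generators

/-! ### Sorting a signed permutation by right multiplications -/

section sorting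

open scoped Pointwise

variable {n l i : ℕ} {w : P}

/-- The squared distance from `w` to the identity on `{1, …, n}`. Right multiplication by a
generator which is a right descent decreases it, so it measures the progress of bubble sort. -/
noncomputable def dispSq (n : ℕ) (w : P) : ℤ := ∑ i ∈ Finset.Icc (1 : ℤ) n, (w i - i) ^ 2

lemma dispSq_nonneg (n : ℕ) (w : P) : 0 ≤ dispSq n w :=
  Finset.sum_nonneg fun _ _ => sq_nonneg _

lemma dispSq_mul_tgen_lt (hw : w ∈ hyperoctahedral n) (hn : 1 ≤ n) (h : w 1 < 0) :
    dispSq n (w * tgen) < dispSq n w := by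
  have hfix (j : ℤ) (hj : 1 ≤ j) (hj1 : j ≠ 1) : (w * tgen) j = w j := by
    rw [Equiv.Perm.mul_apply, tgen_apply, if_neg hj1, if_neg (by omega)]
  have h_one : ((w * tgen) 1 - 1) ^ 2 < (w 1 - 1) ^ 2 := by
    rw [Equiv.Perm.mul_apply, tgen_apply, if_pos rfl, apply_neg hw]
    nlinarith
  refine Finset.sum_lt_sum (fun j hj => ?_) ⟨1, Finset.mem_Icc.mpr (by omega), h_one⟩
  rcases eq_or_ne j 1 with rfl | hj1
  · exact h_one.le
  · rw [hfix j (Finset.mem_Icc.mp hj).1 hj1]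

lemma dispSq_mul_sgen_lt (hi : 1 ≤ i) (hin : i < n) (h : w (i + 1) < w i) :
    dispSq n (w * sgen i) < dispSq n w := by
  rw [← sub_neg, dispSq, dispSq, ← Finset.sum_sub_distrib]
  have hsub : ({(i : ℤ), (i : ℤ) + 1} : Finset ℤ) ⊆ Finset.Icc (1 : ℤ) n := by
    intro j hj
    rw [Finset.mem_insert, Finset.mem_singleton] at hj
    rw [Finset.mem_Icc]
    omega
  rw [← Finset.sum_subset hsub, Finset.sum_pair (by omega)]
  · simp only [Equiv.Perm.mul_apply, sgen_apply hi, if_true, if_neg (by omega : (i : ℤ) + 1 ≠ i)]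
    linarith
  · intro j hj hj'
    rw [Finset.mem_Icc] at hj
    rw [Finset.mem_insert, Finset.mem_singleton, not_or] at hj'
    rw [Equiv.Perm.mul_apply, sgen_apply hi, if_neg hj'.1, if_neg hj'.2, if_neg (by omega),
      if_neg (by omega), sub_self]

lemma subset_of_forall_exists_dispSq_lt {H : Subgroup P} {C : Set P}
    (h : ∀ w ∈ C, w ≠ 1 → ∃ g ∈ H, w * g ∈ C ∧ dispSq n (w * g) < dispSq n w) : C ⊆ H := by
  intro w hw
  induction hk : (dispSq n w).toNat using Nat.strong_induction_on generalizing w with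
  | _ k ih =>
    rcases eq_or_ne w 1 with rfl | hne
    · exact one_mem H
    · obtain ⟨g, hg, hwg, hlt⟩ := h w hw hne
      have := dispSq_nonneg n (w * g)
      exact (H.mul_mem_cancel_right hg).mp (ih _ (by omega) hwg rfl)

lemma closure_Sset (hn : 1 ≤ n) : Subgroup.closure (Sset n) = hyperoctahedral n := by
  refine le_antisymm ((Subgroup.closure_le _).mpr (Sset_subset_hyperoctahedral hn)) ?_
  refine subset_of_forall_exists_dispSq_lt (n := n) fun w hw hne => ?_
  rcases exists_descent hw hne with h1 | ⟨i, hi, hin, hdesc⟩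
  · exact ⟨tgen, Subgroup.subset_closure tgen_mem_Sset,
      mul_mem hw (tgen_mem_hyperoctahedral hn), dispSq_mul_tgen_lt hw hn h1⟩
  · exact ⟨sgen i, Subgroup.subset_closure (sgen_mem_Sset hi hin),
      mul_mem hw (sgen_mem_hyperoctahedral hi hin), dispSq_mul_sgen_lt hi hin hdesc⟩

lemma sgen_mem_SymLR (hi : 1 ≤ i) (hin : i < n) (hil : i ≠ l) : sgen i ∈ SymLR n l :=
  Subgroup.subset_closure ⟨i, ⟨hi, by omega, hil⟩, rfl⟩

lemma SymLR_eq_stabilizer (n l : ℕ) :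
    SymLR n l = hyperoctahedral n ⊓ MulAction.stabilizer P (Set.Ioi (0 : ℤ)) ⊓
      MulAction.stabilizer P (Set.Ioc (0 : ℤ) l) := by
  have hle : SymLR n l ≤ hyperoctahedral n ⊓ MulAction.stabilizer P (Set.Ioi (0 : ℤ)) ⊓
      MulAction.stabilizer P (Set.Ioc (0 : ℤ) l) := by
    refine (Subgroup.closure_le _).mpr ?_
    rintro _ ⟨i, ⟨hi, hin, hil⟩, rfl⟩
    refine ⟨⟨sgen_mem_hyperoctahedral hi (by omega), ?_⟩, ?_⟩
    all_goals
      refine MulAction.mem_stabilizer_set.mpr fun x => ?_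
      simp only [Equiv.Perm.smul_def, sgen_apply hi, Set.mem_Ioi, Set.mem_Ioc]
      split_ifs <;> omega
  refine le_antisymm hle (subset_of_forall_exists_dispSq_lt (n := n) fun w hw hne => ?_)
  have hpos := MulAction.mem_stabilizer_set.mp hw.1.2
  have hblock := MulAction.mem_stabilizer_set.mp hw.2
  simp only [Equiv.Perm.smul_def, Set.mem_Ioi, Set.mem_Ioc] at hpos hblock
  rcases exists_descent hw.1.1 hne with h1 | ⟨i, hi, hin, hdesc⟩
  · have := hpos 1
    omega
  · have hil : i ≠ l := by
      rintro rfl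
      have := hpos (i + 1)
      have := hblock i
      have := hblock (i + 1)
      omega
    have hs : sgen i ∈ SymLR n l := sgen_mem_SymLR hi hin hil
    exact ⟨sgen i, hs, mul_mem hw (hle hs), dispSq_mul_sgen_lt hi hin hdesc⟩

lemma mem_SymLR : w ∈ SymLR n l ↔ w ∈ hyperoctahedral n ∧ (∀ i, 0 < w i ↔ 0 < i) ∧
    ∀ i, 0 < w i ∧ w i ≤ l ↔ 0 < i ∧ i ≤ l := by
  simp only [SymLR_eq_stabilizer, Subgroup.mem_inf, MulAction.mem_stabilizer_set,
    Equiv.Perm.smul_def, Set.mem_Ioi, Set.mem_Ioc, and_assoc]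

lemma SymN_eq_SymLR_zero (n : ℕ) : SymN n = SymLR n 0 := by
  have : Set.Icc 1 (n - 1) = {i | 1 ≤ i ∧ i ≤ n - 1 ∧ i ≠ 0} := by
    ext i
    rw [Set.mem_Icc, Set.mem_ofPred_eq]
    omega
  rw [SymN, SymLR, this]

lemma mem_SymN : w ∈ SymN n ↔ w ∈ hyperoctahedral n ∧ ∀ i, 0 < w i ↔ 0 < i := by
  rw [SymN_eq_SymLR_zero, mem_SymLR]
  refine and_congr_right fun _ => and_iff_left_of_imp fun _ i => ?_
  push_cast
  omega

lemma SymLR_le_SymN (n l : ℕ) : SymLR n l ≤ SymN n :=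
  fun _ hw => mem_SymN.mpr ⟨(mem_SymLR.mp hw).1, (mem_SymLR.mp hw).2.1⟩

end sorting

/-! ### Length and the exchange condition -/

/-- The exchange condition: when the word `L` is built up letter by letter from the right, `D`
starts out false and ends up true, and the letter that makes it true can be deleted. -/
lemma exists_word_prod_eq_mul_of_exchange {G : Type*} [Monoid G] {S : Set G} {r : G}
    {D : G → Prop} (h_one : ¬ D 1)
    (hstep : ∀ g ∈ S, ∀ u ∈ Submonoid.closure S, ¬ D u → D (g * u) → g * u * r = u)
    {L : List G} (hL : ∀ g ∈ L, g ∈ S) (hD : D L.prod) :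
    ∃ L' : List G, (∀ g ∈ L', g ∈ S) ∧ L'.prod = L.prod * r ∧ L'.length < L.length := by
  induction L with
  | nil => exact absurd hD h_one
  | cons g L ih =>
    rw [List.forall_mem_cons] at hL
    by_cases hDL : D L.prod
    · obtain ⟨L', hL', hprod, hlen⟩ := ih hL.2 hDL
      exact ⟨g :: L', List.forall_mem_cons.mpr ⟨hL.1, hL'⟩,
        by rw [List.prod_cons, hprod, List.prod_cons, mul_assoc], Nat.succ_lt_succ hlen⟩
    · have hu : L.prod ∈ Submonoid.closure S :=
        Submonoid.list_prod_mem _ fun x hx => Submonoid.subset_closure (hL.2 x hx)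
      rw [List.prod_cons] at hD ⊢
      exact ⟨L, hL.2, (hstep g hL.1 _ hu hDL hD).symm, Nat.lt_succ_self _⟩

section length

variable {n i : ℕ} {u w g : P} {L : List P}

lemma prod_mem_hyperoctahedral (hn : 1 ≤ n) (hL : ∀ g ∈ L, g ∈ Sset n) :
    L.prod ∈ hyperoctahedral n :=
  Subgroup.list_prod_mem _ fun g hg => Sset_subset_hyperoctahedral hn (hL g hg)

lemma len_prod_le (hL : ∀ g ∈ L, g ∈ Sset n) : len n L.prod ≤ L.length :=
  Nat.sInf_le ⟨L, hL, rfl, rfl⟩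

lemma exists_reduced_word (hn : 1 ≤ n) (hw : w ∈ hyperoctahedral n) :
    ∃ L : List P, (∀ g ∈ L, g ∈ Sset n) ∧ L.prod = w ∧ L.length = len n w := by
  rw [← closure_Sset hn, ← Subgroup.mem_toSubmonoid, Subgroup.closure_toSubmonoid] at hw
  obtain ⟨L, hL, hprod⟩ := Submonoid.exists_list_of_mem_closure hw
  refine Nat.sInf_mem (s := {k | ∃ L : List P, (∀ g ∈ L, g ∈ Sset n) ∧ L.prod = w ∧
    L.length = k}) ⟨L.length, L, fun g hg => (hL g hg).elim id fun hinv => ?_, hprod, rfl⟩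
  rw [Set.mem_inv] at hinv
  rwa [← inv_eq_self_of_mem_Sset hinv, inv_inv] at hinv

lemma len_mul_le_succ (hn : 1 ≤ n) (hg : g ∈ Sset n) (hu : u ∈ hyperoctahedral n) :
    len n (g * u) ≤ len n u + 1 := by
  obtain ⟨L, hL, rfl, hlen⟩ := exists_reduced_word hn hu
  rw [← hlen, ← List.prod_cons, ← List.length_cons]
  exact len_prod_le (List.forall_mem_cons.mpr ⟨hg, hL⟩)

lemma len_mul_lt_of_exchange (hn : 1 ≤ n) {r : P} {D : P → Prop} (h_one : ¬ D 1)
    (hstep : ∀ g ∈ Sset n, ∀ u ∈ hyperoctahedral n, ¬ D u → D (g * u) → g * u * r = u)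
    (hw : w ∈ hyperoctahedral n) (hD : D w) : len n (w * r) < len n w := by
  obtain ⟨L, hL, rfl, hlen⟩ := exists_reduced_word hn hw
  have hle : Submonoid.closure (Sset n) ≤ (hyperoctahedral n).toSubmonoid :=
    Submonoid.closure_le.mpr (Sset_subset_hyperoctahedral hn)
  obtain ⟨L', hL', hprod, hlt⟩ := exists_word_prod_eq_mul_of_exchange h_one
    (fun g hg u hu => hstep g hg u (hle hu)) hL hD
  rw [← hprod, ← hlen]
  exact (len_prod_le hL').trans_lt hlt

lemma len_mul_ttgen_lt (hn : 1 ≤ n) (hw : w ∈ hyperoctahedral n) (h : w i < 0) :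
    len n (w * ttgen i) < len n w := by
  refine len_mul_lt_of_exchange hn (D := fun u => u i < 0) (by simp) ?_ hw h
  intro g hg u hu hnonneg hneg
  rw [Equiv.Perm.mul_apply] at hneg
  rcases eq_tgen_or_eq_sgen_of_mem_Sset hg with rfl | ⟨a, ha, -, rfl⟩
  · have hui : u i = 1 := by
      rw [tgen_apply] at hneg
      split_ifs at hneg <;> omega
    rw [tgen_mul_eq_mul_ttgen hu (i := i) (by rw [hui, abs_one]), mul_assoc, ttgen_mul_self,
      mul_one]
  · rw [sgen_apply ha] at hneg
    split_ifs at hneg <;> omega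

lemma len_mul_sgen_lt (hn : 1 ≤ n) (hi : 1 ≤ i) (hw : w ∈ hyperoctahedral n)
    (h : w (i + 1) < w i) : len n (w * sgen i) < len n w := by
  refine len_mul_lt_of_exchange hn (D := fun u => u (i + 1) < u i) (by simp) ?_ hw h
  intro g hg u hu hasc hdesc
  simp only [Equiv.Perm.mul_apply] at hdesc
  rcases eq_tgen_or_eq_sgen_of_mem_Sset hg with rfl | ⟨a, ha, -, rfl⟩
  · have h₀ : u i ≠ 0 := apply_ne_zero hu (by omega)
    have h₁ : u (i + 1) ≠ 0 := apply_ne_zero hu (by omega)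
    have hne : u (i + 1) ≠ -u i := fun heq => by
      rw [← apply_neg hu] at heq
      have := u.injective heq
      omega
    simp only [tgen_apply] at hdesc
    split_ifs at hdesc <;> omega
  · have hcross : u i = a ∧ u (i + 1) = a + 1 ∨ u i = -((a : ℤ) + 1) ∧ u (i + 1) = -a := by
      simp only [sgen_apply ha] at hdesc
      split_ifs at hdesc <;> omega
    rw [sgen_mul_eq_mul_sgen hu ha hcross, mul_assoc, sgen_mul_self hi, mul_one]

end length

/-! ### The statistic `ℓ_t` -/

/-- The positions in `{1, …, n}` at which `w` takes a negative value; their number is `ℓ_t(w)`. -/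
noncomputable def negPositions (n : ℕ) (w : P) : Finset ℤ := {i ∈ Finset.Icc (1 : ℤ) n | w i < 0}

section negPositions

variable {n a : ℕ} {i : ℤ} {u w : P} {L : List P}

lemma mem_negPositions (hw : w ∈ hyperoctahedral n) :
    i ∈ negPositions n w ↔ 0 < i ∧ w i < 0 := by
  have hle : w i < 0 → i ≤ n := fun h => by
    by_contra! hi
    rw [apply_of_lt hw hi] at h
    omega
  rw [negPositions, Finset.mem_filter, Finset.mem_Icc]
  omega

lemma negPositions_one : negPositions n 1 = ∅ := by
  ext i
  simp only [mem_negPositions (one_mem (hyperoctahedral n)), Equiv.Perm.one_apply,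
    Finset.notMem_empty, iff_false]
  omega

lemma negPositions_sgen_mul (ha : 1 ≤ a) : negPositions n (sgen a * u) = negPositions n u := by
  refine Finset.filter_congr fun i _ => ?_
  rw [Equiv.Perm.mul_apply, sgen_apply ha]
  split_ifs <;> omega

lemma negPositions_tgen_mul (hn : 1 ≤ n) (hu : u ∈ hyperoctahedral n) (hi : 0 < i)
    (h : u i = 1) : negPositions n (tgen * u) = insert i (negPositions n u) := by
  ext j
  rw [Finset.mem_insert, mem_negPositions hu,
    mem_negPositions (mul_mem (tgen_mem_hyperoctahedral hn) hu), Equiv.Perm.mul_apply, tgen_apply]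
  have hone : u j = 1 ↔ j = i := by rw [← h, u.injective.eq_iff]
  have hneg : u j = -1 ↔ j = -i := by rw [← h, ← apply_neg hu, u.injective.eq_iff]
  split_ifs <;> omega

lemma card_negPositions_mul_of_mem_SymN (hw : w ∈ hyperoctahedral n) (hu : u ∈ SymN n) :
    (negPositions n (w * u)).card = (negPositions n w).card := by
  have hmap : negPositions n (w * u) = (negPositions n w).map u.symm.toEmbedding := by
    ext i
    rw [Finset.mem_map_equiv, Equiv.symm_symm, mem_negPositions hw,
      mem_negPositions (mul_mem hw (mem_SymN.mp hu).1), (mem_SymN.mp hu).2, Equiv.Perm.mul_apply]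
  rw [hmap, Finset.card_map]

lemma exists_pos_abs_apply_eq_one (hu : u ∈ hyperoctahedral n) :
    ∃ i : ℕ, 0 < i ∧ |u i| = 1 := by
  obtain ⟨j, hj⟩ := u.surjective 1
  refine ⟨j.natAbs, Int.natAbs_pos.mpr ?_, ?_⟩
  · rintro rfl
    rw [apply_zero hu] at hj
    omega
  · rcases Int.natAbs_eq j with h | h
    · rw [← h, hj, abs_one]
    · rw [← abs_neg, ← apply_neg hu, ← h, hj, abs_one]

lemma tcount_cons (g : P) (L : List P) :
    tcount (g :: L) = (if g = tgen then 1 else 0) + tcount L := rfl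

lemma sgen_ne_tgen (ha : 1 ≤ a) : sgen a ≠ tgen := by
  intro h
  have hval : sgen a a = tgen a := by rw [h]
  rw [sgen_apply ha, if_pos rfl, tgen_apply] at hval
  split_ifs at hval <;> omega

lemma card_negPositions_tgen_mul (hn : 1 ≤ n) (hu : u ∈ hyperoctahedral n)
    (hlen : len n u < len n (tgen * u)) :
    (negPositions n (tgen * u)).card = (negPositions n u).card + 1 := by
  obtain ⟨i, hi, habs⟩ := exists_pos_abs_apply_eq_one hu
  have hnonneg : 0 ≤ u i := by
    by_contra! hneg
    rw [tgen_mul_eq_mul_ttgen hu habs] at hlen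
    exact hlen.not_gt (len_mul_ttgen_lt hn hu hneg)
  have hui : u i = 1 := by rwa [abs_of_nonneg hnonneg] at habs
  rw [negPositions_tgen_mul hn hu (Int.natCast_pos.mpr hi) hui, Finset.card_insert_of_notMem]
  rw [mem_negPositions hu]
  omega

lemma tcount_eq_card_negPositions (hn : 1 ≤ n) (hL : ∀ g ∈ L, g ∈ Sset n)
    (hred : L.length = len n L.prod) : tcount L = (negPositions n L.prod).card := by
  induction L with
  | nil => rw [List.prod_nil, negPositions_one]; rfl
  | cons g L ih =>
    rw [List.forall_mem_cons] at hL
    rw [List.length_cons, List.prod_cons] at hred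
    have hu := prod_mem_hyperoctahedral hn hL.2
    have hle := len_mul_le_succ hn hL.1 hu
    have hredL : L.length = len n L.prod := by
      have := len_prod_le hL.2
      omega
    rw [tcount_cons, List.prod_cons, ih hL.2 hredL]
    rcases eq_tgen_or_eq_sgen_of_mem_Sset hL.1 with rfl | ⟨a, ha, -, rfl⟩
    · rw [if_pos rfl, card_negPositions_tgen_mul hn hu (by omega), add_comm]
    · rw [if_neg (sgen_ne_tgen ha), negPositions_sgen_mul ha, zero_add]

lemma tlen_eq_card_negPositions (hn : 1 ≤ n) (hw : w ∈ hyperoctahedral n) :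
    tlen n w = (negPositions n w).card := by
  obtain ⟨L, hL, hprod, hlen⟩ := exists_reduced_word hn hw
  obtain ⟨L', hL', rfl, hlen', hcount⟩ := Nat.sInf_mem (s := {k | ∃ L : List P,
    (∀ g ∈ L, g ∈ Sset n) ∧ L.prod = w ∧ L.length = len n w ∧ tcount L = k})
    ⟨tcount L, L, hL, hprod, hlen, rfl⟩
  exact hcount.symm.trans (tcount_eq_card_negPositions hn hL' hlen')

end negPositions

/-! ### Minimal coset representatives -/

section cosets

variable {m n l : ℕ} {u v w x : P}

lemma exists_mul_mem_Xset (hw : w ∈ hyperoctahedral n) : ∃ u ∈ SymN n, w * u ∈ Xset n := by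
  obtain ⟨u, hu, hmin⟩ :=
    (measure fun u => len n (w * u)).wf.has_min (SymN n : Set P) ⟨1, one_mem _⟩
  refine ⟨u, hu, mul_mem hw (mem_SymN.mp hu).1, fun v hv => not_lt.mp ?_⟩
  rw [mul_assoc]
  exact hmin (u * v) (mul_mem hu hv)

lemma strictMonoOn_of_mem_Xset (hx : x ∈ Xset n) :
    StrictMonoOn x (Set.Ioi 0) := by
  refine strictMonoOn_of_forall_lt hx.1 fun i hi hin => ?_
  by_contra! h
  have hdesc : x (i + 1) < x i := h.lt_of_ne fun heq => by have := x.injective heq; omega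
  have hs : sgen i ∈ SymN n := Subgroup.subset_closure ⟨i, ⟨hi, by omega⟩, rfl⟩
  exact (hx.2 _ hs).not_gt (len_mul_sgen_lt (by omega) hi hx.1 hdesc)

/-- The elements of `W_n` that send `1, …, l` to negative and `l + 1, …, n` to positive numbers. -/
def negInitial (n l : ℕ) : Set P :=
  {w | w ∈ hyperoctahedral n ∧ ∀ i, 0 < i → (w i < 0 ↔ i ≤ l)}

lemma negInitial_mono (h : m ≤ n) : negInitial m l ⊆ negInitial n l :=
  fun _ hw => ⟨hyperoctahedral.mono h hw.1, hw.2⟩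

lemma pos_apply_iff_of_mem_negInitial (hw : w ∈ negInitial n l) (i : ℤ) :
    0 < w i ↔ l < i ∨ -l ≤ i ∧ i < 0 := by
  rcases lt_trichotomy i 0 with hi | rfl | hi
  · have := hw.2 (-i) (by omega)
    rw [apply_neg hw.1] at this
    omega
  · rw [apply_zero hw.1]
    omega
  · have := hw.2 i hi
    have := apply_ne_zero hw.1 hi.ne'
    omega

lemma card_negPositions_of_mem_negInitial (hw : w ∈ negInitial n l) :
    (negPositions n w).card = l := by
  have : negPositions n w = Finset.Icc (1 : ℤ) l := by
    ext i
    have := hw.2 i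
    rw [mem_negPositions hw.1, Finset.mem_Icc]
    omega
  rw [this, Int.card_Icc]
  omega

lemma mem_iff_le_card_of_downwardClosed {S : Finset ℤ} (hpos : ∀ i ∈ S, 0 < i)
    (hlower : ∀ i ∈ S, ∀ j, 0 < j → j ≤ i → j ∈ S) {i : ℤ} (hi : 0 < i) :
    i ∈ S ↔ i ≤ S.card := by
  constructor
  · intro hiS
    have hsub : Finset.Icc 1 i ⊆ S := fun j hj => by
      rw [Finset.mem_Icc] at hj
      exact hlower i hiS j (by omega) hj.2
    have := Finset.card_le_card hsub
    rw [Int.card_Icc] at this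
    omega
  · intro hle
    by_contra hiS
    have hsub : S ⊆ Finset.Icc 1 (i - 1) := fun j hj => by
      have : ¬ i ≤ j := fun hij => hiS (hlower j hj i hi hij)
      have := hpos j hj
      rw [Finset.mem_Icc]
      omega
    have := Finset.card_le_card hsub
    rw [Int.card_Icc] at this
    omega

lemma mem_negInitial_card_of_strictMonoOn (hx : x ∈ hyperoctahedral n)
    (hmono : StrictMonoOn x (Set.Ioi 0)) : x ∈ negInitial n (negPositions n x).card := by
  refine ⟨hx, fun i hi => ?_⟩
  rw [← mem_iff_le_card_of_downwardClosed (fun j hj => ((mem_negPositions hx).mp hj).1) ?_ hi,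
    mem_negPositions hx, and_iff_right hi]
  intro j hj k hk hkj
  obtain ⟨hj, hneg⟩ := (mem_negPositions hx).mp hj
  exact (mem_negPositions hx).mpr ⟨hk, (hmono.monotoneOn hk hj hkj).trans_lt hneg⟩

lemma Xl_eq_inter_negInitial (hn : 1 ≤ n) : Xl n l = Xset n ∩ negInitial n l := by
  ext x
  refine and_congr_right fun hx => ?_
  rw [tlen_eq_card_negPositions hn hx.1]
  refine ⟨?_, card_negPositions_of_mem_negInitial⟩
  rintro rfl
  exact mem_negInitial_card_of_strictMonoOn hx.1 (strictMonoOn_of_mem_Xset hx)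

lemma mul_mem_negInitial_iff_mem_SymLR (hv : v ∈ negInitial n l) (hu : u ∈ SymN n) :
    v * u ∈ negInitial n l ↔ u ∈ SymLR n l := by
  obtain ⟨hu, hpos⟩ := mem_SymN.mp hu
  refine ⟨fun h => mem_SymLR.mpr ⟨hu, hpos, fun i => ?_⟩,
    fun h => ⟨mul_mem hv.1 hu, fun i hi => ?_⟩⟩
  · have h₁ := h.2 i
    have h₂ := hv.2 (u i)
    have := hpos i
    rw [Equiv.Perm.mul_apply] at h₁
    omega
  · have := (mem_SymLR.mp h).2.2 i
    have := hpos i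
    have := hv.2 (u i)
    rw [Equiv.Perm.mul_apply]
    omega

lemma XSset_eq_negInitial (hn : 1 ≤ n) : XSset n l = negInitial n l := by
  rw [XSset, Xl_eq_inter_negInitial hn]
  refine Set.Subset.antisymm ?_ fun v hv => ?_
  · rintro _ ⟨x, ⟨-, hx⟩, σ, hσ, rfl⟩
    exact (mul_mem_negInitial_iff_mem_SymLR hx (SymLR_le_SymN n l hσ)).mpr hσ
  · obtain ⟨u, hu, hvu⟩ := exists_mul_mem_Xset hv.1
    have hcard : (negPositions n (v * u)).card = l := by
      rw [card_negPositions_mul_of_mem_SymN hv.1 hu, card_negPositions_of_mem_negInitial hv]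
    have hvu' : v * u ∈ negInitial n l := by
      simpa only [hcard] using
        mem_negInitial_card_of_strictMonoOn hvu.1 (strictMonoOn_of_mem_Xset hvu)
    have hu' : u ∈ SymLR n l := (mul_mem_negInitial_iff_mem_SymLR hv hu).mp hvu'
    exact ⟨v * u, ⟨hvu, hvu'⟩, u⁻¹, inv_mem hu', mul_inv_cancel_right v u⟩

lemma image_mul_right_SymN {a : P} (ha : a ∈ negInitial n l) :
    (fun w => w * a) '' (SymN n : Set P) = negInitial n l := by
  refine Set.Subset.antisymm ?_ fun v hv => ⟨v * a⁻¹, ?_, inv_mul_cancel_right v a⟩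
  · rintro _ ⟨w, hw, rfl⟩
    obtain ⟨hw, hpos⟩ := mem_SymN.mp hw
    have hwa : w * a ∈ hyperoctahedral n := mul_mem hw ha.1
    refine ⟨hwa, fun i hi => ?_⟩
    have := hpos (a i)
    have := ha.2 i hi
    have := apply_ne_zero ha.1 hi.ne'
    have := apply_ne_zero hwa hi.ne'
    rw [Equiv.Perm.mul_apply] at *
    omega
  · refine mem_SymN.mpr ⟨mul_mem hv.1 (inv_mem ha.1), fun i => ?_⟩
    rw [Equiv.Perm.mul_apply, pos_apply_iff_of_mem_negInitial hv,
      ← pos_apply_iff_of_mem_negInitial ha, Equiv.Perm.coe_inv, Equiv.apply_symm_apply]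

end cosets

/-! ### The element `a_l` -/

lemma rgen_succ_mem_hyperoctahedral (k : ℕ) : rgen (k + 1) ∈ hyperoctahedral (k + 1) := by
  induction k with
  | zero => exact tgen_mem_hyperoctahedral le_rfl
  | succ k ih =>
    exact mul_mem (sgen_mem_hyperoctahedral (by omega) (by omega))
      (hyperoctahedral.mono (Nat.le_succ _) ih)

lemma rgen_succ_apply_of_pos (k : ℕ) {x : ℤ} (hx : 0 < x) :
    rgen (k + 1) x = if x = 1 then -((k : ℤ) + 1) else if x ≤ k + 1 then x - 1 else x := by
  induction k with
  | zero =>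
    rw [rgen, tgen_apply]
    split_ifs <;> push_cast at * <;> omega
  | succ k ih =>
    rw [rgen, Equiv.Perm.mul_apply, ih, sgen_apply (by omega)]
    split_ifs <;> push_cast at * <;> omega

lemma al_succ (l : ℕ) : al (l + 1) = al l * rgen (l + 1) := by
  simp only [al, List.range_succ, List.map_append, List.map_cons, List.map_nil, List.prod_append,
    List.prod_singleton]

lemma al_mem_negInitial (l : ℕ) : al l ∈ negInitial l l := by
  induction l with
  | zero => exact ⟨one_mem _, fun i hi => by
      rw [al, List.range_zero, List.map_nil, List.prod_nil, Equiv.Perm.one_apply]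
      omega⟩
  | succ l ih =>
    rw [al_succ]
    refine ⟨mul_mem (hyperoctahedral.mono (Nat.le_succ l) ih.1) (rgen_succ_mem_hyperoctahedral l),
      fun i hi => ?_⟩
    rw [Equiv.Perm.mul_apply, rgen_succ_apply_of_pos l hi]
    have hfix : al l ((l : ℤ) + 1) = l + 1 := apply_of_lt ih.1 (by omega)
    have hpred := ih.2 (i - 1)
    have hself := ih.2 i hi
    push_cast
    split_ifs
    · rw [apply_neg ih.1, hfix]
      omega
    · omega
    · omega

/-- For `0 ≤ l ≤ n`, the map `𝔖_n → X_n^{(l)}·𝔖_{l,n-l}`, `w ↦ w a_l`,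
is a bijection. -/
theorem Sym_mul_al_bij (n l : ℕ) (hn : 1 ≤ n) (hl : l ≤ n) :
    Set.BijOn (fun w => w * al l) (SymN n : Set P) (XSset n l) := by
  have hal : al l ∈ negInitial n l := negInitial_mono hl (al_mem_negInitial l)
  have hinj : Set.InjOn (fun w => w * al l) (SymN n : Set P) := (mul_left_injective (al l)).injOn
  rw [XSset_eq_negInitial hn, ← image_mul_right_SymN hal]
  exact hinj.bijOn_image
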